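/- For every p ∈ [1,∞] there is a constant c > 0, depending only on f, D and p, such that for every ν ∈ (0,1], the time average { |u(t)|_{L^p}² } over [T₁,T₂] satisfies { |u(t)|_{L^p}² } ≥ c. -/

import Mathlib

open MeasureTheory Set
open scoped ENNReal

/-- The `L^p` norm (on the circle, i.e. over one period `(0,1]`) of the `m`-th
derivative of a function `v : ℝ → ℝ` (identified with a function on `S¹ = ℝ/ℤ`). -/
noncomputable def sobLp (m : ℕ) (p : ℝ≥0∞) (v : ℝ → ℝ) : ℝ :=
  (eLpNorm (iteratedDeriv m v) p (volume.restrict (Ioc (0:ℝ) 1))).toReal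

/-- `u` is a smooth, space-periodic, zero-mean-value solution of the generalised
Burgers equation `u_t + f'(u) u_x - ν u_xx = 0` with strongly convex `f` and
nonzero initial condition. -/
structure IsBurgersSolution (f : ℝ → ℝ) (σ ν : ℝ) (u : ℝ → ℝ → ℝ) : Prop where
  hf : ContDiff ℝ (⊤ : ℕ∞) f
  hσ : 0 < σ
  hconv : ∀ y, σ ≤ iteratedDeriv 2 f y
  hν : 0 < ν
  hu : ContDiffOn ℝ (⊤ : ℕ∞) (Function.uncurry u) (Ici (0:ℝ) ×ˢ univ)
  hper : ∀ t x, u t (x + 1) = u t x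
  hpde : ∀ t, 0 < t → ∀ x,
    deriv (fun s => u s x) t + deriv f (u t x) * deriv (u t) x
      - ν * deriv (deriv (u t)) x = 0
  hmean : ∀ t, 0 ≤ t → ∫ x in Ioc (0:ℝ) 1, u t x = 0
  hinit : ∃ x, u 0 x ≠ 0

/-- The quantity `D = max(|u₀|₁⁻¹, |u₀|_{1,∞})`. -/
noncomputable def burgersD (u : ℝ → ℝ → ℝ) : ℝ :=
  max (sobLp 0 1 (u 0))⁻¹ (sobLp 1 ⊤ (u 0))

/-- `T₁ = D⁻² C̃⁻¹ / 4`. -/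
noncomputable def burgersT₁ (D Ct : ℝ) : ℝ := (D ^ 2)⁻¹ * Ct⁻¹ / 4

/-- `T₂ = max(3T₁/2, 2Dσ⁻¹)`. -/
noncomputable def burgersT₂ (σ D Ct : ℝ) : ℝ :=
  max (3 / 2 * burgersT₁ D Ct) (2 * D * σ⁻¹)

/-- Time average over `[T₁, T₂]`. -/
noncomputable def timeAvg (T₁ T₂ : ℝ) (A : ℝ → ℝ) : ℝ :=
  (T₂ - T₁)⁻¹ * ∫ t in T₁..T₂, A t

/-- The structure function `S_p(ℓ)`. -/
noncomputable def structFun (T₁ T₂ : ℝ) (u : ℝ → ℝ → ℝ) (p ℓ : ℝ) : ℝ :=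
  timeAvg T₁ T₂ (fun t => ∫ x in Ioc (0:ℝ) 1, |u t (x + ℓ) - u t x| ^ p)


/-! ### Norm lemmas -/

lemma bg_prob : IsProbabilityMeasure (volume.restrict (Ioc (0:ℝ) 1)) := ⟨by simp⟩

lemma bg_memLp (p : ℝ≥0∞) {v : ℝ → ℝ} (hv : Continuous v) :
    MemLp v p (volume.restrict (Ioc (0:ℝ) 1)) := by
  obtain ⟨C, hC⟩ := (isCompact_Icc (a := (0:ℝ)) (b := 1)).exists_bound_of_continuousOn
    hv.continuousOn
  refine MemLp.of_bound hv.aestronglyMeasurable C ?_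
  refine (ae_restrict_iff' measurableSet_Ioc).2 (Filter.Eventually.of_forall fun x hx => ?_)
  exact hC x (Ioc_subset_Icc_self hx)

lemma bg_sob_le (p : ℝ≥0∞) {v : ℝ → ℝ} {C : ℝ} (hC : 0 ≤ C)
    (h : ∀ x ∈ Ioc (0:ℝ) 1, |v x| ≤ C) : sobLp 0 p v ≤ C := by
  have h1 := eLpNorm_le_of_ae_bound (p := p) (μ := volume.restrict (Ioc (0:ℝ) 1)) (f := v) (C := C)
    ((ae_restrict_iff' measurableSet_Ioc).2 (Filter.Eventually.of_forall fun x hx => h x hx))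
  have h2 := ENNReal.toReal_mono (by simp) h1
  simpa [sobLp, hC] using h2

lemma bg_sob_sub (p : ℝ≥0∞) (hp : 1 ≤ p) {v w : ℝ → ℝ} (hv : Continuous v) (hw : Continuous w) :
    sobLp 0 p v ≤ sobLp 0 p w + sobLp 0 p (fun x => v x - w x) := by
  have h1 := eLpNorm_add_le (μ := volume.restrict (Ioc (0:ℝ) 1)) (f := w) (g := fun x => v x - w x)
    hw.aestronglyMeasurable (hv.sub hw).aestronglyMeasurable hp
  have e : w + (fun x => v x - w x) = v := by ext x; simp
  rw [e] at h1
  have a1 := (bg_memLp p hw).eLpNorm_ne_top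
  have a2 := (bg_memLp p (hv.sub hw)).eLpNorm_ne_top
  have h2 := ENNReal.toReal_mono (ENNReal.add_ne_top.2 ⟨a1, a2⟩) h1
  rw [ENNReal.toReal_add a1 a2] at h2
  simp only [sobLp, iteratedDeriv_zero]
  exact h2

lemma bg_sob_one {v : ℝ → ℝ} (hv : Continuous v) :
    sobLp 0 1 v = ∫ x in (0:ℝ)..1, |v x| := by
  rw [intervalIntegral.integral_of_le zero_le_one]
  have := integral_norm_eq_lintegral_enorm (μ := volume.restrict (Ioc (0:ℝ) 1)) (f := v)
    hv.aestronglyMeasurable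
  simp only [sobLp, iteratedDeriv_zero, eLpNorm_one_eq_lintegral_enorm, ← this, Real.norm_eq_abs]

lemma bg_sob_mono (p : ℝ≥0∞) (hp : 1 ≤ p) {v : ℝ → ℝ} (hv : Continuous v) :
    sobLp 0 1 v ≤ sobLp 0 p v := by
  have := bg_prob
  have h := eLpNorm_le_eLpNorm_of_exponent_le (μ := volume.restrict (Ioc (0:ℝ) 1)) (f := v) hp
    hv.aestronglyMeasurable
  simpa [sobLp] using ENNReal.toReal_mono (bg_memLp p hv).eLpNorm_ne_top h

lemma bg_sob_two {v : ℝ → ℝ} (hv : Continuous (deriv v)) :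
    sobLp 1 2 v ^ 2 = ∫ x in (0:ℝ)..1, deriv v x ^ 2 := by
  rw [intervalIntegral.integral_of_le zero_le_one]
  have h := toReal_eLpNorm (p := 2) (μ := volume.restrict (Ioc (0:ℝ) 1)) (f := deriv v)
    hv.aestronglyMeasurable
  have h2 := (bg_memLp 2 hv)
  simp only [sobLp, iteratedDeriv_one]
  rw [h2.eLpNorm_eq_integral_rpow_norm (by norm_num) (by norm_num)]
  have h0 : 0 ≤ ∫ x in Ioc (0:ℝ) 1, deriv v x ^ 2 := integral_nonneg fun x => sq_nonneg _
  simp only [ENNReal.toReal_ofNat, Real.norm_eq_abs, Real.rpow_ofNat, sq_abs]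
  rw [ENNReal.toReal_ofReal (Real.rpow_nonneg h0 _), ← Real.rpow_natCast, ← Real.rpow_mul h0]
  norm_num

/-- oscillation bounded by the sup of the derivative -/
lemma bg_osc {v : ℝ → ℝ} (hv : ContDiff ℝ 1 v) {a b : ℝ} (ha : 0 ≤ a) (hab : a ≤ b) (hb : b ≤ 1) :
    |v b - v a| ≤ sobLp 1 ⊤ v := by
  have hc : Continuous (deriv v) := hv.continuous_deriv le_rfl
  have h1 : ∫ x in a..b, deriv v x = v b - v a :=
    intervalIntegral.integral_deriv_eq_sub (fun x _ => (hv.differentiable one_ne_zero) x)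
      (hc.intervalIntegrable _ _)
  have h2 : |v b - v a| ≤ ∫ x in a..b, |deriv v x| := by
    rw [← h1]; exact intervalIntegral.abs_integral_le_integral_abs hab
  have h3 : ∫ x in a..b, |deriv v x| ≤ ∫ x in (0:ℝ)..1, |deriv v x| :=
    intervalIntegral.integral_mono_interval ha hab hb
      (Filter.Eventually.of_forall fun x => abs_nonneg _) (hc.abs.intervalIntegrable _ _)
  have h4 := bg_sob_mono ⊤ le_top hc
  rw [bg_sob_one hc] at h4
  have h5 : sobLp 1 ⊤ v = sobLp 0 ⊤ (deriv v) := by simp [sobLp]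
  rw [h5]; linarith

lemma bg_sup {v : ℝ → ℝ} (hv : ContDiff ℝ 1 v) (hm : ∫ x in Ioc (0:ℝ) 1, v x = 0)
    {x : ℝ} (hx : x ∈ Icc (0:ℝ) 1) : |v x| ≤ sobLp 1 ⊤ v := by
  have hc := hv.continuous
  rw [← intervalIntegral.integral_of_le zero_le_one] at hm
  obtain ⟨y, hy, hy2⟩ := exists_eq_interval_average (f := v) (a := 0) (b := 1) zero_ne_one
    hc.continuousOn
  rw [interval_average_eq, hm] at hy2
  simp at hy hy2
  have e : |v x| = |v x - v y| := by rw [hy2]; simp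
  rw [e]
  rcases le_total x y with h | h
  · rw [abs_sub_comm]; exact bg_osc hv hx.1 h hy.2.le
  · exact bg_osc hv hy.1.le h hx.2

lemma bg_cs {v : ℝ → ℝ} (hv : Continuous v) :
    (∫ x in (0:ℝ)..1, |v x|) ^ 2 ≤ ∫ x in (0:ℝ)..1, v x ^ 2 := by
  set m := ∫ x in (0:ℝ)..1, |v x| with hm
  have h : 0 ≤ ∫ x in (0:ℝ)..1, (|v x| - m) ^ 2 :=
    intervalIntegral.integral_nonneg zero_le_one fun x _ => sq_nonneg _
  have e : ∀ x, (|v x| - m) ^ 2 = v x ^ 2 - 2 * m * |v x| + m ^ 2 := fun x => by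
    rw [← sq_abs (v x)]; ring
  simp only [e] at h
  rw [intervalIntegral.integral_add, intervalIntegral.integral_sub,
    intervalIntegral.integral_const_mul, ← hm] at h
  · simp at h; nlinarith
  all_goals exact Continuous.intervalIntegrable (by fun_prop) _ _

/-! ### Maximum principle -/

lemma bg_second {g : ℝ → ℝ} {x : ℝ} (hg : ContinuousAt g x) (h : IsLocalMax g x) :
    deriv (deriv g) x ≤ 0 := by
  by_contra! hpos
  have h1 := isLocalMin_of_deriv_deriv_pos hpos h.deriv_eq_zero hg
  have h2 : g =ᶠ[nhds x] fun _ => g x := by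
    filter_upwards [h, h1] with y a b using le_antisymm a b
  have h3 := h2.deriv.deriv_eq
  simp at h3
  exact absurd hpos (by simp [h3])

lemma bg_time {g : ℝ → ℝ} {t ε : ℝ} (ht : 0 < t) (hg : DifferentiableAt ℝ g t)
    (h : ∀ s ∈ Icc 0 t, g s - ε * s ≤ g t - ε * t) : ε ≤ deriv g t := by
  have h1 := (hasDerivWithinAt_iff_tendsto_slope' (s := Iio t) (by simp)).1
    hg.hasDerivAt.hasDerivWithinAt
  refine ge_of_tendsto h1 ?_
  filter_upwards [Ioo_mem_nhdsLT ht] with s hs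
  have := h s ⟨hs.1.le, hs.2.le⟩
  rw [slope_def_field, le_div_iff_of_neg (by linarith [hs.2])]
  linarith

lemma bg_max {v a : ℝ → ℝ → ℝ} {ν M : ℝ} (hν : 0 < ν)
    (hc : ContinuousOn (Function.uncurry v) (Ici (0:ℝ) ×ˢ univ))
    (hper : ∀ t x, v t (x + 1) = v t x)
    (hd : ∀ t, 0 < t → ∀ x, DifferentiableAt ℝ (fun s => v s x) t)
    (hpde : ∀ t, 0 < t → ∀ x,
      deriv (fun s => v s x) t + a t x * deriv (v t) x - ν * deriv (deriv (v t)) x = 0)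
    (h0 : ∀ x ∈ Icc (0:ℝ) 1, v 0 x ≤ M) {t x : ℝ} (ht : 0 ≤ t) (hx : x ∈ Icc (0:ℝ) 1) :
    v t x ≤ M := by
  have key : ∀ ε, 0 < ε → v t x - ε * t ≤ M := by
    intro ε hε
    obtain ⟨⟨t0, x0⟩, hmem, hmax⟩ := (isCompact_Icc (a := (0:ℝ)) (b := t)).prod
      (isCompact_Icc (a := (0:ℝ)) (b := 1)) |>.exists_isMaxOn (f := fun z => v z.1 z.2 - ε * z.1)
      ⟨(0, 0), by simp [ht]⟩
      ((hc.mono fun z hz => ⟨hz.1.1, mem_univ _⟩).sub (by fun_prop))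
    have hm : ∀ s ∈ Icc 0 t, ∀ y ∈ Icc (0:ℝ) 1, v s y - ε * s ≤ v t0 x0 - ε * t0 :=
      fun s hs y hy => hmax (show (s, y) ∈ Icc 0 t ×ˢ Icc (0:ℝ) 1 from ⟨hs, hy⟩)
    obtain ⟨ht0, hx0⟩ := hmem
    simp only at ht0 hx0
    refine (hm t ⟨ht, le_rfl⟩ x hx).trans ?_
    rcases ht0.1.eq_or_lt with h | h
    · rw [← h]; simpa using h0 x0 hx0
    · exfalso
      have hglob : ∀ y, v t0 y ≤ v t0 x0 := by
        intro y
        have hp : Function.Periodic (v t0) 1 := hper t0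
        obtain ⟨z, hz, hz2⟩ := hp.exists_mem_Ico₀ one_pos y
        rw [hz2]
        have := hm t0 ht0 z ⟨hz.1, hz.2.le⟩
        linarith
      have hloc : IsLocalMax (v t0) x0 := Filter.Eventually.of_forall hglob
      have hcont : Continuous (v t0) := by
        have : Continuous fun y => Function.uncurry v (t0, y) :=
          hc.comp_continuous (by fun_prop) fun y => ⟨ht0.1, mem_univ _⟩
        exact this
      have e1 := bg_second hcont.continuousAt hloc
      have e2 := bg_time h (hd t0 h x0) (fun s hs => hm s ⟨hs.1, hs.2.trans ht0.2⟩ x0 hx0)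
      have e3 := hpde t0 h x0
      rw [hloc.deriv_eq_zero] at e3
      nlinarith
  by_contra! hlt
  have := key ((v t x - M) / (2 * (t + 1))) (by apply div_pos <;> linarith)
  have e : (v t x - M) / (2 * (t + 1)) * t ≤ (v t x - M) / 2 := by
    rw [div_mul_eq_mul_div, div_le_div_iff₀ (by linarith) (by norm_num)]
    nlinarith
  linarith

/-! ### Energy estimate -/

section Burgers

variable {f : ℝ → ℝ} {σ ν : ℝ} {u : ℝ → ℝ → ℝ}

lemma bg_smooth_x (h : IsBurgersSolution f σ ν u) {t : ℝ} (ht : 0 ≤ t) :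
    ContDiff ℝ (⊤ : ℕ∞) (u t) := by
  have : ContDiff ℝ (⊤ : ℕ∞) fun y : ℝ => Function.uncurry u (t, y) :=
    h.hu.comp_contDiff (by fun_prop) fun y => ⟨ht, mem_univ _⟩
  exact this

lemma bg_at (h : IsBurgersSolution f σ ν u) {t : ℝ} (ht : 0 < t) (x : ℝ) :
    ContDiffAt ℝ (⊤ : ℕ∞) (Function.uncurry u) (t, x) :=
  h.hu.contDiffAt (prod_mem_nhds (Ici_mem_nhds ht) Filter.univ_mem)

lemma bg_hasDeriv_t (h : IsBurgersSolution f σ ν u) {t : ℝ} (ht : 0 < t) (x : ℝ) :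
    HasDerivAt (fun s => u s x) (fderiv ℝ (Function.uncurry u) (t, x) (1, 0)) t := by
  have h1 := ((bg_at h ht x).differentiableAt (by simp)).hasFDerivAt
  have h2 : HasDerivAt (fun s : ℝ => (s, x)) (1, 0) t :=
    (hasDerivAt_id t).prodMk (hasDerivAt_const t x)
  exact h1.comp_hasDerivAt t h2

lemma bg_cont_t (h : IsBurgersSolution f σ ν u) :
    ContinuousOn (fun z : ℝ × ℝ => fderiv ℝ (Function.uncurry u) z (1, 0)) (Ioi 0 ×ˢ univ) := by
  intro z hz
  have h1 : ContinuousAt (fderiv ℝ (Function.uncurry u)) (z.1, z.2) :=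
    ((bg_at h hz.1 z.2).fderiv_right (m := 0) (by simp)).continuousAt
  exact (h1.clm_apply continuousAt_const).continuousWithinAt

/-- the solution, extended to negative times by its initial value -/
lemma bg_ext_cont (h : IsBurgersSolution f σ ν u) :
    Continuous (Function.uncurry fun t x => u (max t 0) x) := by
  have : Continuous fun z : ℝ × ℝ => Function.uncurry u (max z.1 0, z.2) :=
    h.hu.continuousOn.comp_continuous (by fun_prop) fun y => ⟨mem_Ici.2 (le_max_right _ _), mem_univ _⟩
  exact this

lemma bg_space_int (h : IsBurgersSolution f σ ν u) {t : ℝ} (ht : 0 < t) :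
    ∫ x in (0:ℝ)..1, 2 * u t x * fderiv ℝ (Function.uncurry u) (t, x) (1, 0)
      = - (2 * ν * sobLp 1 2 (u t) ^ 2) := by
  have hs := bg_smooth_x h ht.le
  have hs1 : ContDiff ℝ (⊤ : ℕ∞) (deriv (u t)) := by
    have := hs.iterate_deriv 1
    simpa using this
  have hc1 : Continuous (deriv (u t)) := hs1.continuous
  have hc0 : Continuous (u t) := hs.continuous
  have hc2 : Continuous (deriv (deriv (u t))) := hs1.continuous_deriv (by simp)
  have hf1 : Continuous (deriv f) := h.hf.continuous_deriv (by simp)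
  have hd0 : ∀ x, HasDerivAt (u t) (deriv (u t) x) x := fun x =>
    ((hs.differentiable (by simp)) x).hasDerivAt
  have hd1 : ∀ x, HasDerivAt (deriv (u t)) (deriv (deriv (u t)) x) x := fun x =>
    ((hs1.differentiable (by simp)) x).hasDerivAt
  let G : ℝ → ℝ := fun y => ∫ z in (0:ℝ)..y, z * deriv f z
  have hG : ∀ y, HasDerivAt G (y * deriv f y) y := fun y =>
    ((continuous_id.mul hf1).integral_hasStrictDerivAt 0 y).hasDerivAt
  have hper : Function.Periodic (u t) 1 := h.hper t
  have hper1 : deriv (u t) 1 = deriv (u t) 0 := by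
    have e : (fun x => u t (x + 1)) = u t := funext (h.hper t)
    have := deriv_comp_add_const (u t) 1 0
    rw [e] at this
    simpa using this.symm
  have hper0 : u t 1 = u t 0 := by simpa using h.hper t 0
  have hH : ∀ x, HasDerivAt (fun x => 2 * ν * (u t x * deriv (u t) x) - 2 * G (u t x))
      (2 * ν * (deriv (u t) x * deriv (u t) x + u t x * deriv (deriv (u t)) x)
        - 2 * (u t x * deriv f (u t x) * deriv (u t) x)) x := fun x =>
    (((hd0 x).mul (hd1 x)).const_mul (2 * ν)).sub (((hG (u t x)).comp x (hd0 x)).const_mul 2)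
  have hint := intervalIntegral.integral_eq_sub_of_hasDerivAt (a := 0) (b := 1)
    (fun x _ => hH x) (Continuous.intervalIntegrable (by fun_prop) _ _)
  rw [hper1, hper0, sub_self] at hint
  have e : ∀ x, 2 * u t x * fderiv ℝ (Function.uncurry u) (t, x) (1, 0)
      = (2 * ν * (deriv (u t) x * deriv (u t) x + u t x * deriv (deriv (u t)) x)
        - 2 * (u t x * deriv f (u t x) * deriv (u t) x)) - 2 * ν * deriv (u t) x ^ 2 := by
    intro x
    have h1 := h.hpde t ht x
    rw [(bg_hasDeriv_t h ht x).deriv] at h1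
    linear_combination 2 * u t x * h1
  simp only [e]
  rw [intervalIntegral.integral_sub, hint, intervalIntegral.integral_const_mul, bg_sob_two hc1]
  · ring
  all_goals exact Continuous.intervalIntegrable (by fun_prop) _ _

lemma bg_energy_deriv (h : IsBurgersSolution f σ ν u) {t : ℝ} (ht : 0 < t) :
    HasDerivAt (fun s => ∫ x in (0:ℝ)..1, u (max s 0) x ^ 2)
      (- (2 * ν * sobLp 1 2 (u t) ^ 2)) t := by
  have hK : IsCompact (Icc (t/2) (2*t) ×ˢ Icc (0:ℝ) 1) := isCompact_Icc.prod isCompact_Icc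
  have hext := bg_ext_cont h
  have hsub : Icc (t/2) (2*t) ×ˢ Icc (0:ℝ) 1 ⊆ Ioi 0 ×ˢ univ := fun z hz =>
    ⟨(show (0:ℝ) < t/2 by linarith).trans_le hz.1.1, mem_univ _⟩
  have hF' : ContinuousOn (fun z : ℝ × ℝ => 2 * u z.1 z.2 *
      fderiv ℝ (Function.uncurry u) z (1, 0)) (Ioi 0 ×ˢ univ) :=
    ((continuousOn_const.mul (h.hu.continuousOn.mono fun z hz =>
      ⟨mem_Ici.2 (le_of_lt (mem_Ioi.1 hz.1)), mem_univ _⟩))).mul (bg_cont_t h)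
  obtain ⟨C, hC⟩ := hK.exists_bound_of_continuousOn (hF'.mono hsub)
  have hcx : ∀ s, Continuous fun x => u (max s 0) x ^ 2 := fun s =>
    (hext.comp (by fun_prop : Continuous fun x : ℝ => (s, x))).pow 2
  rw [← bg_space_int h ht]
  refine (intervalIntegral.hasDerivAt_integral_of_dominated_loc_of_deriv_le
    (F := fun s x => u (max s 0) x ^ 2)
    (F' := fun s x => 2 * u s x * fderiv ℝ (Function.uncurry u) (s, x) (1, 0))
    (s := Icc (t/2) (2*t)) (bound := fun _ => C)
    (Icc_mem_nhds (by linarith) (by linarith))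
    (Filter.Eventually.of_forall fun s => (hcx s).aestronglyMeasurable)
    ((hcx t).intervalIntegrable _ _) ?_ ?_ (by simp) ?_).2
  · have : Continuous fun x : ℝ => 2 * u t x * fderiv ℝ (Function.uncurry u) (t, x) (1, 0) :=
      hF'.comp_continuous (f := fun x : ℝ => (t, x)) (by fun_prop) fun x => ⟨ht, mem_univ _⟩
    exact this.aestronglyMeasurable
  · refine Filter.Eventually.of_forall fun x hx s hs => hC (s, x) ⟨hs, ?_⟩
    rw [uIoc_of_le zero_le_one] at hx
    exact Ioc_subset_Icc_self hx
  · refine Filter.Eventually.of_forall fun x hx s hs => ?_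
    have hs0 : 0 < s := (show (0:ℝ) < t/2 by linarith).trans_le hs.1
    have h1 := (bg_hasDeriv_t h hs0 x).fun_mul (bg_hasDeriv_t h hs0 x)
    have h2 : HasDerivAt (fun s => u s x ^ 2)
        (2 * u s x * fderiv ℝ (Function.uncurry u) (s, x) (1, 0)) s := by
      have e1 : (fun s => u s x ^ 2) = fun s => u s x * u s x := funext fun s => sq _
      have e2 : 2 * u s x * fderiv ℝ (Function.uncurry u) (s, x) (1, 0)
          = fderiv ℝ (Function.uncurry u) (s, x) (1, 0) * u s x
            + u s x * fderiv ℝ (Function.uncurry u) (s, x) (1, 0) := by ring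
      rw [e1, e2]
      exact h1
    refine h2.congr_of_eventuallyEq ?_
    filter_upwards [Ioi_mem_nhds hs0] with r hr
    rw [max_eq_left (le_of_lt hr)]

lemma bg_energy (h : IsBurgersSolution f σ ν u) {Ct : ℝ}
    (hb : ∀ t, 0 ≤ t → sobLp 1 2 (u t) ^ 2 ≤ Ct * ν⁻¹) {t : ℝ} (ht : 0 ≤ t) :
    (∫ x in (0:ℝ)..1, u 0 x ^ 2) - 2 * Ct * t ≤ ∫ x in (0:ℝ)..1, u t x ^ 2 := by
  have hext := bg_ext_cont h
  have hmono : MonotoneOn (fun s => (∫ x in (0:ℝ)..1, u (max s 0) x ^ 2) + 2 * Ct * s)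
      (Ici 0) := by
    have hd : ∀ s, 0 < s → HasDerivAt (fun s => (∫ x in (0:ℝ)..1, u (max s 0) x ^ 2) + 2 * Ct * s)
        (- (2 * ν * sobLp 1 2 (u s) ^ 2) + 2 * Ct * 1) s := fun s hs =>
      (bg_energy_deriv h hs).add ((hasDerivAt_id s).const_mul (2 * Ct))
    refine monotoneOn_of_deriv_nonneg (convex_Ici 0) ?_ ?_ ?_
    · refine Continuous.continuousOn (Continuous.add ?_ (by fun_prop))
      exact intervalIntegral.continuous_parametric_intervalIntegral_of_continuous'
        (f := fun s x => u (max s 0) x ^ 2) (by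
          have h2 : Continuous fun z : ℝ × ℝ => u (max z.1 0) z.2 ^ 2 := Continuous.pow hext 2
          exact h2) 0 1
    · rw [interior_Ici]
      exact fun s hs => (hd s hs).differentiableAt.differentiableWithinAt
    · rw [interior_Ici]
      intro s hs
      rw [(hd s hs).deriv]
      have h1 := mul_le_mul_of_nonneg_left (hb s (le_of_lt hs)) h.hν.le
      have h2 : ν * (Ct * ν⁻¹) = Ct := by field_simp [h.hν.ne']
      rw [h2] at h1
      linarith
  have := hmono (show (0:ℝ) ∈ Ici 0 by simp) (show t ∈ Ici 0 from ht) ht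
  simp only [max_self, max_eq_left ht, mul_zero, add_zero] at this
  linarith

lemma bg_bound (h : IsBurgersSolution f σ ν u) {t x : ℝ} (ht : 0 ≤ t) (hx : x ∈ Icc (0:ℝ) 1) :
    |u t x| ≤ sobLp 1 ⊤ (u 0) := by
  have h0 : ∀ x ∈ Icc (0:ℝ) 1, |u 0 x| ≤ sobLp 1 ⊤ (u 0) := fun x hx =>
    bg_sup ((bg_smooth_x h le_rfl).of_le (by simp)) (h.hmean 0 le_rfl) hx
  refine abs_le'.2 ⟨?_, ?_⟩
  · exact bg_max (a := fun t x => deriv f (u t x)) h.hν h.hu.continuousOn h.hper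
      (fun t ht x => (bg_hasDeriv_t h ht x).differentiableAt) h.hpde
      (fun x hx => (abs_le'.1 (h0 x hx)).1) ht hx
  · refine bg_max (v := fun t x => - u t x) (a := fun t x => deriv f (u t x)) h.hν
      h.hu.continuousOn.neg (fun t x => by simp [h.hper])
      (fun t ht x => (bg_hasDeriv_t h ht x).differentiableAt.neg) (fun t ht x => ?_)
      (fun x hx => (abs_le'.1 (h0 x hx)).2) ht hx
    have h1 := h.hpde t ht x
    simp only [deriv.fun_neg', deriv.fun_neg] 
    linarith

lemma bg_norm_cont (h : IsBurgersSolution f σ ν u) (p : ℝ≥0∞) (hp : 1 ≤ p) :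
    ContinuousOn (fun t => sobLp 0 p (u t)) (Ici 0) := by
  intro t ht
  have hK : IsCompact (Icc 0 (t+1) ×ˢ Icc (0:ℝ) 1) := isCompact_Icc.prod isCompact_Icc
  have huc := hK.uniformContinuousOn_of_continuous
    (h.hu.continuousOn.mono fun z hz => ⟨hz.1.1, mem_univ _⟩)
  rw [Metric.uniformContinuousOn_iff] at huc
  rw [Metric.continuousWithinAt_iff]
  intro ε hε
  obtain ⟨δ, hδ, hu⟩ := huc (ε/2) (by linarith)
  refine ⟨min δ 1, by positivity, fun {s} hs hd => ?_⟩
  have hd1 : |s - t| < δ := hd.trans_le (min_le_left _ _)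
  have hd2 : |s - t| < 1 := hd.trans_le (min_le_right _ _)
  have hs1 : s ≤ t + 1 := by linarith [(abs_lt.1 hd2).2]
  have hb : ∀ x ∈ Ioc (0:ℝ) 1, |u s x - u t x| ≤ ε/2 := fun x hx => by
    have := hu (s, x) ⟨⟨hs, hs1⟩, Ioc_subset_Icc_self hx⟩ (t, x)
      ⟨⟨ht, by linarith⟩, Ioc_subset_Icc_self hx⟩ (by simpa [Prod.dist_eq, Real.dist_eq, hδ] using hd1)
    exact this.le
  have cs := (bg_smooth_x h hs).continuous
  have ct := (bg_smooth_x h ht).continuous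
  have e1 := bg_sob_sub p hp cs ct
  have e2 := bg_sob_sub p hp ct cs
  have e3 := bg_sob_le p (by linarith : 0 ≤ ε/2) hb
  have e4 := bg_sob_le p (v := fun x => u t x - u s x) (by linarith : 0 ≤ ε/2)
    (fun x hx => by rw [abs_sub_comm]; exact hb x hx)
  rw [Real.dist_eq, abs_lt]
  constructor <;> linarith

lemma bg_init_pos (h : IsBurgersSolution f σ ν u) : 0 < sobLp 0 1 (u 0) := by
  have hc := (bg_smooth_x h le_rfl).continuous
  have hp : Function.Periodic (u 0) 1 := h.hper 0
  obtain ⟨x, hx⟩ := h.hinit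
  obtain ⟨y, hy, hy2⟩ := hp.exists_mem_Ico₀ one_pos x
  rw [hy2] at hx
  rw [bg_sob_one hc]
  exact intervalIntegral.integral_pos zero_lt_one hc.abs.continuousOn (fun _ _ => abs_nonneg _)
    ⟨y, ⟨hy.1, hy.2.le⟩, abs_pos.2 hx⟩

/-- pointwise-in-time lower bound -/
lemma bg_lower (h : IsBurgersSolution f σ ν u) {Ct D : ℝ} (hCt : 0 < Ct) (hD : 0 < D)
    (hDu : burgersD u = D)
    (hb : ∀ t, 0 ≤ t → sobLp 1 2 (u t) ^ 2 ≤ Ct * ν⁻¹) (p : ℝ≥0∞) (hp : 1 ≤ p)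
    {t : ℝ} (ht : 0 ≤ t) (ht2 : t ≤ 3 / 2 * burgersT₁ D Ct) :
    (D ^ 3)⁻¹ / 4 ≤ sobLp 0 p (u t) := by
  have hc := (bg_smooth_x h ht).continuous
  have hc0 := (bg_smooth_x h le_rfl).continuous
  have d1 : (sobLp 0 1 (u 0))⁻¹ ≤ D := hDu ▸ le_max_left _ _
  have d2 : sobLp 1 ⊤ (u 0) ≤ D := hDu ▸ le_max_right _ _
  have d3 : D⁻¹ ≤ sobLp 0 1 (u 0) := inv_le_of_inv_le₀ (bg_init_pos h) d1
  have e0 : (D ^ 2)⁻¹ ≤ ∫ x in (0:ℝ)..1, u 0 x ^ 2 := by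
    refine le_trans ?_ (bg_cs hc0)
    rw [← bg_sob_one hc0, ← inv_pow]
    exact pow_le_pow_left₀ (by positivity) d3 2
  have e1 := bg_energy h hb ht
  have e2 : 2 * Ct * t ≤ 3 / 4 * (D ^ 2)⁻¹ := by
    calc 2 * Ct * t ≤ 2 * Ct * (3 / 2 * burgersT₁ D Ct) := by gcongr
      _ = 3 / 4 * (D ^ 2)⁻¹ := by unfold burgersT₁; field_simp
  have e3 : ∫ x in (0:ℝ)..1, u t x ^ 2 ≤ D * ∫ x in (0:ℝ)..1, |u t x| := by
    rw [← intervalIntegral.integral_const_mul]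
    refine intervalIntegral.integral_mono_on zero_le_one
      (Continuous.intervalIntegrable (by fun_prop) _ _)
      (Continuous.intervalIntegrable (by fun_prop) _ _) fun x hx => ?_
    have := (bg_bound h ht hx).trans d2
    rw [← sq_abs, sq]
    exact mul_le_mul_of_nonneg_right this (abs_nonneg _)
  rw [← bg_sob_one hc] at e3
  have e4 := bg_sob_mono p hp hc
  have e5 : (D ^ 2)⁻¹ / 4 ≤ D * sobLp 0 p (u t) := by
    have := mul_le_mul_of_nonneg_left e4 hD.le
    linarith
  have e6 : (D ^ 2)⁻¹ / 4 = D * ((D ^ 3)⁻¹ / 4) := by field_simp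
  rw [e6] at e5
  exact le_of_mul_le_mul_left e5 hD

end Burgers

/-- For every `p ∈ [1,∞]` there is `c > 0` depending only on `f`,
`D`, `p` such that for every `ν ∈ (0,1]`, the time average over `[T₁,T₂]`
satisfies `{|u(t)|_{L^p}²} ≥ c`. -/
theorem statement7 (f : ℝ → ℝ) (σ D Ct : ℝ) (hCt : 0 < Ct)
    (hCtb : ∀ ν, 0 < ν → ν ≤ 1 →
      ∀ u : ℝ → ℝ → ℝ, IsBurgersSolution f σ ν u → burgersD u = D →
        ∀ t, 0 ≤ t → sobLp 1 2 (u t) ^ 2 ≤ Ct * ν⁻¹)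
    (p : ℝ≥0∞) (hp : 1 ≤ p) :
    ∃ c > 0, ∀ ν, 0 < ν → ν ≤ 1 →
      ∀ u : ℝ → ℝ → ℝ, IsBurgersSolution f σ ν u → burgersD u = D →
        c ≤ timeAvg (burgersT₁ D Ct) (burgersT₂ σ D Ct)
              (fun t => sobLp 0 p (u t) ^ 2) := by
  by_cases hD : 0 < D
  swap
  · refine ⟨1, one_pos, fun ν hν hν1 u hu hDu => absurd ?_ hD⟩
    rw [← hDu]
    exact lt_max_of_lt_left (inv_pos.2 (bg_init_pos hu))
  have hT1 : 0 < burgersT₁ D Ct := by unfold burgersT₁; positivity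
  have hT2 : 3 / 2 * burgersT₁ D Ct ≤ burgersT₂ σ D Ct := le_max_left _ _
  generalize hB : burgersT₂ σ D Ct = B at *
  have hpos : 0 < B - burgersT₁ D Ct := by linarith
  refine ⟨(B - burgersT₁ D Ct)⁻¹ * (burgersT₁ D Ct / 2 * ((D ^ 3)⁻¹ / 4) ^ 2), by positivity,
    fun ν hν hν1 u hu hDu => ?_⟩
  unfold timeAvg
  refine mul_le_mul_of_nonneg_left ?_ (by positivity)
  have hcont : ContinuousOn (fun t => sobLp 0 p (u t) ^ 2) (Ici 0) := (bg_norm_cont hu p hp).pow 2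
  have hii : ∀ a b, 0 ≤ a → a ≤ b →
      IntervalIntegrable (fun t => sobLp 0 p (u t) ^ 2) volume a b := fun a b ha hab =>
    (hcont.mono fun s hs => ha.trans (by rw [uIcc_of_le hab] at hs; exact hs.1)).intervalIntegrable
  calc burgersT₁ D Ct / 2 * ((D ^ 3)⁻¹ / 4) ^ 2
      = ∫ t in (burgersT₁ D Ct)..(3 / 2 * burgersT₁ D Ct), ((D ^ 3)⁻¹ / 4) ^ 2 := by
        rw [intervalIntegral.integral_const, smul_eq_mul]; ring
    _ ≤ ∫ t in (burgersT₁ D Ct)..(3 / 2 * burgersT₁ D Ct), sobLp 0 p (u t) ^ 2 := by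
        refine intervalIntegral.integral_mono_on (by linarith) (by simp)
          (hii _ _ hT1.le (by linarith)) fun t ht => ?_
        exact pow_le_pow_left₀ (by positivity) (bg_lower hu hCt hD hDu
          (hCtb ν hν hν1 u hu hDu) p hp (hT1.le.trans ht.1) ht.2) 2
    _ ≤ ∫ t in (burgersT₁ D Ct)..B, sobLp 0 p (u t) ^ 2 :=
        intervalIntegral.integral_mono_interval le_rfl (by linarith) hT2
          (Filter.Eventually.of_forall fun _ => sq_nonneg _) (hii _ _ hT1.le (by linarith))
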